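/- Let 𝐏 be a finite collection of quartiles and for each P ∈ 𝐏 and j = 1,2,3 let a^{(j)}_{P_j} be a complex number. Then for any 0 ≤ θ_1, θ_2, θ_3 < 1 with θ_1 + θ_2 + θ_3 = 1, |Σ_{P∈𝐏} |I_P|^{−1/2} a^{(1)}_{P_1} a^{(2)}_{P_2} a^{(3)}_{P_3}| ≲ Π_{j=1}^3 size_j((a^{(j)}_{P_j})_{P∈𝐏})^{θ_j} · energy_j((a^{(j)}_{P_j})_{P∈𝐏})^{1−θ_j}, with implicit constant depending only on θ_1, θ_2, θ_3. -/

import Mathlib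

open MeasureTheory Set

/-- The Walsh functions `w_l : ℝ → ℝ`, defined recursively by
`w_0 = χ_{[0,1)}`, `w_{2l}(x) = w_l(2x) + w_l(2x−1)`,
`w_{2l+1}(x) = w_l(2x) − w_l(2x−1)`. -/
noncomputable def walsh : ℕ → ℝ → ℝ
  | 0, x => if x ∈ Set.Ico (0:ℝ) 1 then 1 else 0
  | (n+1), x =>
      if (n+1) % 2 = 0 then walsh ((n+1)/2) (2*x) + walsh ((n+1)/2) (2*x - 1)
      else walsh ((n+1)/2) (2*x) - walsh ((n+1)/2) (2*x - 1)
  decreasing_by all_goals exact Nat.div_lt_self (Nat.succ_pos n) one_lt_two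

/-- A tile `[2^{-k}n, 2^{-k}(n+1)) × [2^k l, 2^k(l+1))`:
a half-open dyadic rectangle of area one. -/
structure Tile where
  k : ℤ
  n : ℤ
  l : ℤ
deriving DecidableEq

namespace Tile

/-- The time interval `I_P = [2^{-k}n, 2^{-k}(n+1))` of a tile. -/
noncomputable def I (p : Tile) : Set ℝ := Set.Ico ((2:ℝ)^(-p.k) * p.n) ((2:ℝ)^(-p.k) * (p.n+1))

/-- The frequency interval `ω_P = [2^k l, 2^k(l+1))` of a tile. -/
noncomputable def freq (p : Tile) : Set ℝ := Set.Ico ((2:ℝ)^(p.k) * p.l) ((2:ℝ)^(p.k) * (p.l+1))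

/-- The tile as a subset `I_P × ω_P` of the time-frequency plane. -/
noncomputable def area (p : Tile) : Set (ℝ × ℝ) := p.I ×ˢ p.freq

/-- The length `|I_P| = 2^{-k}` of the time interval of a tile. -/
noncomputable def len (p : Tile) : ℝ := (2:ℝ)^(-p.k)

/-- The center `ξ_P` of the frequency interval of a tile. -/
noncomputable def ξ (p : Tile) : ℝ := (2:ℝ)^(p.k) * ((p.l : ℝ) + 1/2)

/-- The tile order: `p < q` iff `I_p ⊊ I_q` and `ω_q ⊆ ω_p`. -/
def lt (p q : Tile) : Prop := p.I ⊂ q.I ∧ q.freq ⊆ p.freq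

/-- `p ≤ q` iff `p < q` or `p = q`. -/
def le (p q : Tile) : Prop := Tile.lt p q ∨ p = q

/-- The Walsh wave packet `φ_P(x) = 2^{k/2} w_l(2^k x − n)` of a tile. -/
noncomputable def wp (p : Tile) : ℝ → ℝ :=
  fun x => Real.sqrt ((2:ℝ)^(p.k)) * walsh p.l.toNat ((2:ℝ)^(p.k) * x - p.n)

end Tile

/-- A quartile `[2^{-k}n, 2^{-k}(n+1)) × [2^{k+2}l, 2^{k+2}(l+1))`:
a dyadic rectangle of area four. -/
structure Quartile where
  k : ℤ
  n : ℤ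
  l : ℤ
deriving DecidableEq

namespace Quartile

/-- The time interval `I_P` of a quartile. -/
noncomputable def I (P : Quartile) : Set ℝ := Set.Ico ((2:ℝ)^(-P.k) * P.n) ((2:ℝ)^(-P.k) * (P.n+1))

/-- The length `|I_P| = 2^{-k}` of the time interval of a quartile. -/
noncomputable def len (P : Quartile) : ℝ := (2:ℝ)^(-P.k)

/-- The `j`-th sub-tile `P_j = I_P × [2^k(4l+j−1), 2^k(4l+j))` of a quartile,
for `j = 1, 2, 3`. -/
def tile (P : Quartile) (j : ℕ) : Tile := ⟨P.k, P.n, 4*P.l + ((j - 1 : ℕ) : ℤ)⟩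

end Quartile

/-- `T` is an `i`-tree with top `top`: `P_i ≤ top_i` for all `P ∈ T`. -/
def IsTree (i : ℕ) (top : Quartile) (T : Finset Quartile) : Prop :=
  ∀ P ∈ T, Tile.le (P.tile i) (top.tile i)

/-- `size_j((a_P)_{P∈Ps})`: the sup over trees `T ⊆ Ps` which are `i`-trees for
some `i ≠ j` of `(|I_T|⁻¹ Σ_{P∈T} |a_{P_j}|²)^{1/2}`. -/
noncomputable def size (Ps : Finset Quartile) (j : ℕ) (a : Quartile → ℂ) : ℝ :=
  sSup ((fun p : Quartile × Finset Quartile =>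
      Real.sqrt ((∑ P ∈ p.2, ‖a P‖^2) / p.1.len)) ''
    {p | p.2 ⊆ Ps ∧ ∃ i ∈ ({1,2,3} : Set ℕ), i ≠ j ∧ IsTree i p.1 p.2})

/-- `energy_j((a_P)_{P∈Ps})`: the sup over subsets `D ⊆ Ps` with
`{P_j : P ∈ D}` pairwise disjoint of `(Σ_{P∈D} |a_{P_j}|²)^{1/2}`. -/
noncomputable def energy (Ps : Finset Quartile) (j : ℕ) (a : Quartile → ℂ) : ℝ :=
  sSup ((fun D : Finset Quartile => Real.sqrt (∑ P ∈ D, ‖a P‖^2)) ''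
    {D | D ⊆ Ps ∧ ∀ P ∈ D, ∀ P' ∈ D, P ≠ P' →
      Disjoint (P.tile j).area (P'.tile j).area})

/-- The `L^{1,∞}(I)` quasinorm `sup_{λ>0} λ |{x ∈ I : |g(x)| > λ}|`. -/
noncomputable def weakL1 (g : ℝ → ℝ) (I : Set ℝ) : ℝ :=
  sSup {r | ∃ lam : ℝ, 0 < lam ∧ r = lam * (volume {x ∈ I | lam < |g x|}).toReal}

/-- The square function `(Σ_{P∈T} |a_{P_j}|² χ_{I_P}/|I_P|)^{1/2}` of a tree. -/
noncomputable def treeFn (T : Finset Quartile) (a : Quartile → ℂ) : ℝ → ℝ :=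
  fun x => Real.sqrt (∑ P ∈ T, ‖a P‖^2 * (P.I.indicator (fun _ => (1:ℝ)) x) / P.len)

/-!
By Hölder, an `i`-tree with top `t` contributes at most `|I_t| ∏ⱼ size_j`, with `ℓ^∞` on the `i`-th
coefficients and `ℓ²` on the other two. To make the sizes small, remove the trees violating
`size_j ≤ energy_j λ / 2`: among the `i`-trees, for `i ≠ j`, choose first the one whose top
frequency lies furthest in the direction of the `j`-th sub-tile, discard all quartiles below its
top, and repeat. Two meeting `j`-th sub-tiles are comparable, and the order of selection rules this
out for different selected trees; hence the selected `j`-th sub-tiles are disjoint, and the energy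
bounds the total length of the tops by `O(λ⁻²)`.

Halving `λ` repeatedly, with `s_j = size_j / energy_j`, the level `λ` contributes
`∏ⱼ energy_j · λ⁻² ∏ⱼ min (s_j, λ)`. Since `∑ θ_j = 1` and some `θ_i` lies strictly between `0` and
`1`, this is at most `∏ⱼ energy_j s_j ^ θ_j` times a factor decaying geometrically in both
directions away from `λ = s_i`.
-/

/-! ### Dyadic intervals and the order on sub-tiles -/

/-- The half-open dyadic interval of length `2 ^ k` and index `n`. Time intervals of tiles are of
this form with exponent `-k`, frequency intervals with exponent `k`. -/
def dyadicInterval (k n : ℤ) : Set ℝ := Ico ((2 : ℝ) ^ k * n) ((2 : ℝ) ^ k * (n + 1))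

namespace dyadicInterval

variable {k k' n n' : ℤ} {x : ℝ}

lemma mem_iff_floor_eq : x ∈ dyadicInterval k n ↔ ⌊x / (2 : ℝ) ^ k⌋ = n := by
  rw [Int.floor_eq_iff, le_div_iff₀' (by positivity), div_lt_iff₀' (by positivity)]
  rfl

lemma left_lt_right (k n : ℤ) : (2 : ℝ) ^ k * n < (2 : ℝ) ^ k * (n + 1) :=
  mul_lt_mul_of_pos_left (lt_add_one _) (by positivity)

lemma left_mem (k n : ℤ) : (2 : ℝ) ^ k * n ∈ dyadicInterval k n :=
  left_mem_Ico.2 (left_lt_right k n)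

lemma floor_div_two_zpow_add (x : ℝ) (k : ℤ) (m : ℕ) :
    ⌊x / (2 : ℝ) ^ (k + m)⌋ = ⌊x / (2 : ℝ) ^ k⌋ / 2 ^ m := by
  rw [zpow_add₀ two_ne_zero, zpow_natCast, ← div_div]
  exact_mod_cast Int.floor_div_natCast (x / (2 : ℝ) ^ k) (2 ^ m)

lemma subset_of_mem (hk : k ≤ k') (hx : x ∈ dyadicInterval k n) (hx' : x ∈ dyadicInterval k' n') :
    dyadicInterval k n ⊆ dyadicInterval k' n' := by
  obtain ⟨m, rfl⟩ := Int.le.dest hk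
  intro y hy
  rw [mem_iff_floor_eq] at hx hy
  rw [mem_iff_floor_eq, floor_div_two_zpow_add] at hx' ⊢
  rw [hy, ← hx, hx']

lemma le_of_subset (h : dyadicInterval k n ⊆ dyadicInterval k' n') : k ≤ k' := by
  have h := (Ico_subset_Ico_iff (left_lt_right k n)).1 h
  exact (zpow_le_zpow_iff_right₀ (one_lt_two (α := ℝ))).1 (by linarith)

lemma subset_iff : dyadicInterval k n ⊆ dyadicInterval k' n' ↔
    ∃ m : ℕ, k' = k + m ∧ n / 2 ^ m = n' := by
  constructor
  · intro h
    obtain ⟨m, rfl⟩ := Int.le.dest (le_of_subset h)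
    have hmem := h (left_mem k n)
    rw [mem_iff_floor_eq, floor_div_two_zpow_add, mem_iff_floor_eq.1 (left_mem k n)] at hmem
    exact ⟨m, rfl, hmem⟩
  · rintro ⟨m, rfl, rfl⟩ x hx
    rw [mem_iff_floor_eq, floor_div_two_zpow_add, mem_iff_floor_eq.1 hx]

lemma eq_iff : dyadicInterval k n = dyadicInterval k' n' ↔ k = k' ∧ n = n' := by
  refine ⟨fun h => ?_, by rintro ⟨rfl, rfl⟩; rfl⟩
  obtain ⟨m, hk, hn⟩ := subset_iff.1 h.subset
  have hk' := le_of_subset h.superset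
  obtain rfl : m = 0 := by omega
  simp_all

end dyadicInterval

namespace Tile

variable {p q : Tile}

lemma I_eq_dyadicInterval (p : Tile) : p.I = dyadicInterval (-p.k) p.n := rfl

lemma freq_eq_dyadicInterval (p : Tile) : p.freq = dyadicInterval p.k p.l := rfl

lemma ξ_mem_freq (p : Tile) : p.ξ ∈ p.freq := by
  have hk : (0 : ℝ) < 2 ^ p.k := by positivity
  exact ⟨mul_le_mul_of_nonneg_left (by linarith) hk.le, mul_lt_mul_of_pos_left (by linarith) hk⟩

lemma le_iff_subset : p.le q ↔ p.I ⊆ q.I ∧ q.freq ⊆ p.freq := by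
  constructor
  · rintro (⟨hI, hfreq⟩ | rfl)
    exacts [⟨hI.subset, hfreq⟩, ⟨subset_rfl, subset_rfl⟩]
  rintro ⟨hI, hfreq⟩
  by_cases hqp : q.I ⊆ p.I
  · right
    obtain ⟨hk, hn⟩ := dyadicInterval.eq_iff.1 (hI.antisymm hqp)
    obtain ⟨m, hm, hl⟩ := dyadicInterval.subset_iff.1 hfreq
    obtain rfl : m = 0 := by omega
    cases p
    cases q
    simp_all
  · exact Or.inl ⟨⟨hI, hqp⟩, hfreq⟩

lemma le_iff_ediv : p.le q ↔ ∃ m : ℕ, p.k = q.k + m ∧ p.n / 2 ^ m = q.n ∧ q.l / 2 ^ m = p.l := by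
  rw [le_iff_subset, I_eq_dyadicInterval, I_eq_dyadicInterval, freq_eq_dyadicInterval,
    freq_eq_dyadicInterval, dyadicInterval.subset_iff, dyadicInterval.subset_iff]
  constructor
  · rintro ⟨⟨m, hm, hn⟩, m', hm', hl⟩
    obtain rfl : m = m' := by omega
    exact ⟨m, hm', hn, hl⟩
  · rintro ⟨m, hm, hn, hl⟩
    exact ⟨⟨m, by omega, hn⟩, m, hm, hl⟩

lemma le_refl (p : Tile) : p.le p := Or.inr rfl

lemma le.freq_subset (h : p.le q) : q.freq ⊆ p.freq := (le_iff_subset.1 h).2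

lemma le_or_le_of_not_disjoint_area (h : ¬ Disjoint p.area q.area) : p.le q ∨ q.le p := by
  obtain ⟨⟨x, y⟩, ⟨hxp, hyp⟩, hxq, hyq⟩ := not_disjoint_iff.1 h
  rw [le_iff_subset, le_iff_subset]
  rcases le_total q.k p.k with hk | hk
  · exact Or.inl ⟨dyadicInterval.subset_of_mem (neg_le_neg hk) hxp hxq,
      dyadicInterval.subset_of_mem hk hyq hyp⟩
  · exact Or.inr ⟨dyadicInterval.subset_of_mem (neg_le_neg hk) hxq hxp,
      dyadicInterval.subset_of_mem hk hyp hyq⟩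

end Tile

namespace Quartile

variable {P P' t t' : Quartile} {i j : Fin 3}

/-- The sub-tile `P_{i+1}` of a quartile. Indexing the sub-tiles by `Fin 3` makes `i` the position
of its frequency interval among the four quarters of the frequency interval of `P`. -/
abbrev subtile (P : Quartile) (i : Fin 3) : Tile := P.tile (i + 1)

lemma len_pos (P : Quartile) : 0 < P.len := zpow_pos two_pos _

lemma subtile_le_iff : (P.subtile i).le (t.subtile i) ↔
    ∃ m : ℕ, P.k = t.k + m ∧ P.n / 2 ^ m = t.n ∧ (4 * t.l + i : ℤ) / 2 ^ m = 4 * P.l + i :=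
  Tile.le_iff_ediv

lemma len_le_of_subtile_le (h : (P.subtile i).le (t.subtile i)) : P.len ≤ t.len := by
  obtain ⟨m, hm, -⟩ := subtile_le_iff.1 h
  exact zpow_le_zpow_right₀ one_le_two (by omega)

lemma four_mul_add_ediv_two_pow (l : ℤ) (i : Fin 3) (m : ℕ) :
    (4 * l + i : ℤ) / 2 ^ (m + 2) = l / 2 ^ m := by
  rw [add_comm m, pow_add, ← Int.ediv_ediv_of_nonneg (by norm_num)]
  congr 1
  omega

lemma ediv_eq_of_quarter_ediv {l l' : ℤ} {m : ℕ} (h : (4 * l + i : ℤ) / 2 ^ m = 4 * l' + i) :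
    l / 2 ^ m = l' := by
  rw [← four_mul_add_ediv_two_pow l i, pow_add, ← Int.ediv_ediv_of_nonneg (by positivity), h]
  omega

/-- If the quarter `j` of a dyadic interval contains the quarter `j` of a shorter one, it also
contains the other quarters of the latter, or it is the quarter `0` and has twice their length. -/
lemma quarter_ediv_separated {l l' : ℤ} {m : ℕ} (hm : m ≠ 0)
    (h : (4 * l + j : ℤ) / 2 ^ m = 4 * l' + j) :
    (j < i → (4 * l + i : ℤ) / 2 ^ m < 4 * l' + i) ∧
      (i < j → 4 * l' + i < (4 * l + i : ℤ) / 2 ^ m) := by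
  obtain _ | _ | m := m
  · exact absurd rfl hm
  · rw [zero_add, pow_one] at h ⊢
    omega
  · rw [four_mul_add_ediv_two_pow] at h ⊢
    omega

/-- Transitivity at the level of frequency indices: the quarter `q` is `i` or `j`, unless the
outermost containment is by a factor of two. -/
lemma exists_quarter_ediv {l l' l'' : ℤ} {m m' : ℕ} (hi : (4 * l + i : ℤ) / 2 ^ m = 4 * l' + i)
    (hj : (4 * l' + j : ℤ) / 2 ^ m' = 4 * l'' + j) :
    ∃ q : Fin 3, (4 * l + q : ℤ) / 2 ^ (m + m') = 4 * l'' + q := by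
  have hl : l / 2 ^ m = l' := ediv_eq_of_quarter_ediv hi
  obtain _ | _ | m' := m'
  · have hl' : l' = l'' := by simpa using ediv_eq_of_quarter_ediv hj
    exact ⟨i, hl' ▸ hi⟩
  · obtain _ | m := m
    · have hl' : l = l' := by simpa using hl
      exact ⟨j, by simpa [hl'] using hj⟩
    · rw [pow_succ, ← Int.ediv_ediv_of_nonneg (by positivity)] at hl
      rw [zero_add, pow_one] at hj
      obtain hq | hq : l / 2 ^ m = 4 * l'' + (0 : Fin 3) ∨ l / 2 ^ m = 4 * l'' + (1 : Fin 3) := by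
        simp only [Fin.val_zero, Fin.val_one]
        omega
      exacts [⟨0, (four_mul_add_ediv_two_pow l 0 m).trans hq⟩,
        ⟨1, (four_mul_add_ediv_two_pow l 1 m).trans hq⟩]
  · refine ⟨j, ?_⟩
    rw [four_mul_add_ediv_two_pow] at hj
    rw [show m + (m' + 1 + 1) = m + m' + 2 from rfl, four_mul_add_ediv_two_pow, pow_add,
      ← Int.ediv_ediv_of_nonneg (by positivity), hl, hj]

/-- A strict order relation between the `j`-th sub-tiles displaces the other frequency intervals
of the quartile with the longer time interval in the direction of `j`. -/
lemma mul_freq_lt_of_subtile_le (h : (P.subtile j).le (P'.subtile j)) (hne : P ≠ P') (hij : i ≠ j)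
    {x y : ℝ} (hx : x ∈ (P.subtile i).freq) (hy : y ∈ (P'.subtile i).freq) :
    ((i : ℝ) - j) * y < ((i : ℝ) - j) * x := by
  obtain ⟨m, hk, hn, hl⟩ := subtile_le_iff.1 h
  have hm : m ≠ 0 := by
    rintro rfl
    cases P
    cases P'
    simp_all
  have hx' : ⌊x / (2 : ℝ) ^ P.k⌋ = 4 * P.l + i := dyadicInterval.mem_iff_floor_eq.1 hx
  have hy' : ⌊y / (2 : ℝ) ^ P.k⌋ = (4 * P'.l + i : ℤ) / 2 ^ m := by
    rw [hk, dyadicInterval.floor_div_two_zpow_add]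
    exact congrArg (· / 2 ^ m) (dyadicInterval.mem_iff_floor_eq.1 hy)
  have lt_of_floor_lt {u v : ℝ} (huv : ⌊u / (2 : ℝ) ^ P.k⌋ < ⌊v / (2 : ℝ) ^ P.k⌋) : u < v :=
    (div_lt_div_iff_of_pos_right (by positivity)).1 (Int.floor_mono.reflect_lt huv)
  obtain ⟨hright, hleft⟩ := quarter_ediv_separated (i := i) hm hl
  rcases hij.lt_or_gt with hlt | hlt
  · exact mul_lt_mul_of_neg_left (lt_of_floor_lt (by rw [hx', hy']; exact hleft hlt))
      (sub_neg.2 (by exact_mod_cast hlt))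
  · exact mul_lt_mul_of_pos_left (lt_of_floor_lt (by rw [hx', hy']; exact hright hlt))
      (sub_pos.2 (by exact_mod_cast hlt))

/-- `P` lies below the top `t` if it may belong to an `i`-tree with top `t` for some `i`. -/
def Below (P t : Quartile) : Prop := ∃ i, (P.subtile i).le (t.subtile i)

lemma Below.trans (h' : P'.Below P) (h : P.Below t) : P'.Below t := by
  obtain ⟨i, hi⟩ := h
  obtain ⟨j, hj⟩ := h'
  obtain ⟨m, hk, hn, hl⟩ := subtile_le_iff.1 hi
  obtain ⟨m', hk', hn', hl'⟩ := subtile_le_iff.1 hj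
  obtain ⟨q, hq⟩ := exists_quarter_ediv hl hl'
  refine ⟨q, subtile_le_iff.2 ⟨m + m', by push_cast; omega, ?_, hq⟩⟩
  rw [add_comm, pow_add, ← Int.ediv_ediv_of_nonneg (by positivity), hn', hn]

/-- Two `j`-th sub-tiles which meet are comparable: `P'_j ≤ P_j` puts `P'` below `t`, and
`P_j ≤ P'_j` puts the frequency of `t'` strictly further in the direction of `j`. -/
lemma disjoint_area_of_not_below (hij : i ≠ j) (hP : (P.subtile i).le (t.subtile i))
    (hP' : (P'.subtile i).le (t'.subtile i))
    (hξ : ((i : ℝ) - j) * (t.subtile i).ξ ≤ ((i : ℝ) - j) * (t'.subtile i).ξ)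
    (hbelow : ¬ P'.Below t) : Disjoint (P.subtile j).area (P'.subtile j).area := by
  by_contra hmeet
  rcases Tile.le_or_le_of_not_disjoint_area hmeet with hle | hle
  · have hne : P ≠ P' := by
      rintro rfl
      exact hbelow ⟨i, hP⟩
    exact (mul_freq_lt_of_subtile_le hle hne hij (hP.freq_subset (Tile.ξ_mem_freq _))
      (hP'.freq_subset (Tile.ξ_mem_freq _))).not_ge hξ
  · exact hbelow (Below.trans ⟨j, hle⟩ ⟨i, hP⟩)

end Quartile

lemma IsTree.pairwiseDisjoint_area {i j : Fin 3} (hij : i ≠ j) {t : Quartile} {T : Finset Quartile}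
    (hT : IsTree (i + 1) t T) :
    (T : Set Quartile).PairwiseDisjoint fun P => (P.subtile j).area := by
  intro P hP P' hP' hne
  by_contra hmeet
  have hξ := (hT P hP).freq_subset (Tile.ξ_mem_freq _)
  have hξ' := (hT P' hP').freq_subset (Tile.ξ_mem_freq _)
  rcases Tile.le_or_le_of_not_disjoint_area hmeet with hle | hle
  · exact (Quartile.mul_freq_lt_of_subtile_le hle hne hij hξ hξ').false
  · exact (Quartile.mul_freq_lt_of_subtile_le hle hne.symm hij hξ' hξ).false

/-! ### Size and energy -/

lemma isTree_singleton (i : ℕ) (P : Quartile) : IsTree i P {P} := by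
  simp [IsTree, Tile.le_refl]

section SizeEnergy

variable {Ps Qs T D : Finset Quartile} {i j : Fin 3} {t P : Quartile} {a : Quartile → ℂ} {c : ℝ}

lemma mem_one_two_three_iff {n : ℕ} : n ∈ ({1, 2, 3} : Set ℕ) ↔ ∃ i : Fin 3, (i + 1 : ℕ) = n := by
  simp [Fin.exists_fin_succ, eq_comm]

lemma bddAbove_size (Ps : Finset Quartile) (j : ℕ) (a : Quartile → ℂ) :
    BddAbove ((fun p : Quartile × Finset Quartile => √((∑ P ∈ p.2, ‖a P‖ ^ 2) / p.1.len)) ''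
      {p | p.2 ⊆ Ps ∧ ∃ i ∈ ({1, 2, 3} : Set ℕ), i ≠ j ∧ IsTree i p.1 p.2}) := by
  refine ⟨√(∑ P ∈ Ps, ‖a P‖ ^ 2 / P.len), ?_⟩
  rintro _ ⟨⟨t, T⟩, ⟨hTP, _, hi, -, hT⟩, rfl⟩
  obtain ⟨i, rfl⟩ := mem_one_two_three_iff.1 hi
  refine Real.sqrt_le_sqrt ?_
  calc (∑ P ∈ T, ‖a P‖ ^ 2) / t.len = ∑ P ∈ T, ‖a P‖ ^ 2 / t.len := Finset.sum_div ..
    _ ≤ ∑ P ∈ T, ‖a P‖ ^ 2 / P.len := Finset.sum_le_sum fun P hP =>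
      div_le_div_of_nonneg_left (by positivity) P.len_pos (Quartile.len_le_of_subtile_le (hT P hP))
    _ ≤ ∑ P ∈ Ps, ‖a P‖ ^ 2 / P.len :=
      Finset.sum_le_sum_of_subset_of_nonneg hTP fun P _ _ => div_nonneg (by positivity) P.len_pos.le

lemma size_nonneg (Ps : Finset Quartile) (j : ℕ) (a : Quartile → ℂ) : 0 ≤ size Ps j a :=
  Real.sSup_nonneg (forall_mem_image.2 fun _ _ => Real.sqrt_nonneg _)

lemma IsTree.sum_sq_le_size_sq (hT : IsTree (i + 1) t T) (hTP : T ⊆ Ps) (hij : i ≠ j)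
    (a : Quartile → ℂ) : ∑ P ∈ T, ‖a P‖ ^ 2 ≤ size Ps (j + 1) a ^ 2 * t.len := by
  rw [← div_le_iff₀ t.len_pos, ← Real.sqrt_le_left (size_nonneg ..)]
  exact le_csSup (bddAbove_size ..) ⟨(t, T), ⟨hTP, i + 1, mem_one_two_three_iff.2 ⟨i, rfl⟩,
    by simpa [Fin.val_inj] using hij, hT⟩, rfl⟩

lemma IsTree.sum_norm_mul_norm_le {k : Fin 3} (hT : IsTree (i + 1) t T) (hTP : T ⊆ Ps)
    (hij : i ≠ j) (hik : i ≠ k) (a b : Quartile → ℂ) :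
    ∑ P ∈ T, ‖a P‖ * ‖b P‖ ≤ size Ps (j + 1) a * size Ps (k + 1) b * t.len := by
  have hlen := t.len_pos.le
  refine le_of_sq_le_sq ?_ (mul_nonneg (mul_nonneg (size_nonneg ..) (size_nonneg ..)) hlen)
  calc (∑ P ∈ T, ‖a P‖ * ‖b P‖) ^ 2 ≤ (∑ P ∈ T, ‖a P‖ ^ 2) * ∑ P ∈ T, ‖b P‖ ^ 2 :=
        Finset.sum_mul_sq_le_sq_mul_sq ..
    _ ≤ (size Ps (j + 1) a ^ 2 * t.len) * (size Ps (k + 1) b ^ 2 * t.len) := by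
        gcongr
        exacts [hT.sum_sq_le_size_sq hTP hij a, hT.sum_sq_le_size_sq hTP hik b]
    _ = (size Ps (j + 1) a * size Ps (k + 1) b * t.len) ^ 2 := by ring

lemma size_le (hc : 0 ≤ c) (h : ∀ i ≠ j, ∀ T ⊆ Ps, ∀ t, IsTree (i + 1) t T →
    ∑ P ∈ T, ‖a P‖ ^ 2 ≤ c ^ 2 * t.len) : size Ps (j + 1) a ≤ c := by
  refine Real.sSup_le (forall_mem_image.2 ?_) hc
  rintro ⟨t, T⟩ ⟨hTP, _, hi, hij, hT⟩
  obtain ⟨i, rfl⟩ := mem_one_two_three_iff.1 hi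
  rw [Real.sqrt_le_left hc, div_le_iff₀ t.len_pos]
  exact h i (by rintro rfl; exact hij rfl) T hTP t hT

lemma size_mono (h : Qs ⊆ Ps) (j : Fin 3) (a : Quartile → ℂ) :
    size Qs (j + 1) a ≤ size Ps (j + 1) a :=
  size_le (size_nonneg ..) fun _ hij _ hTQ _ hT => hT.sum_sq_le_size_sq (hTQ.trans h) hij a

lemma norm_le_size_mul_sqrt_len (hP : P ∈ Ps) (j : Fin 3) (a : Quartile → ℂ) :
    ‖a P‖ ≤ size Ps (j + 1) a * √P.len := by
  obtain ⟨i, hij⟩ := exists_ne j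
  have h := (isTree_singleton (i + 1) P).sum_sq_le_size_sq (Finset.singleton_subset_iff.2 hP) hij a
  rw [Finset.sum_singleton, ← Real.sq_sqrt P.len_pos.le, ← mul_pow] at h
  exact le_of_sq_le_sq h (mul_nonneg (size_nonneg ..) (Real.sqrt_nonneg _))

lemma size_pos (hP : P ∈ Ps) (ha : a P ≠ 0) : 0 < size Ps (j + 1) a :=
  pos_of_mul_pos_left ((norm_pos_iff.2 ha).trans_le (norm_le_size_mul_sqrt_len hP j a))
    (Real.sqrt_nonneg _)

lemma bddAbove_energy (Ps : Finset Quartile) (j : ℕ) (a : Quartile → ℂ) :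
    BddAbove ((fun D : Finset Quartile => √(∑ P ∈ D, ‖a P‖ ^ 2)) ''
      {D | D ⊆ Ps ∧ ∀ P ∈ D, ∀ P' ∈ D, P ≠ P' → Disjoint (P.tile j).area (P'.tile j).area}) := by
  refine ⟨√(∑ P ∈ Ps, ‖a P‖ ^ 2), forall_mem_image.2 fun D hD => Real.sqrt_le_sqrt ?_⟩
  exact Finset.sum_le_sum_of_subset_of_nonneg hD.1 fun _ _ _ => by positivity

lemma energy_nonneg (Ps : Finset Quartile) (j : ℕ) (a : Quartile → ℂ) : 0 ≤ energy Ps j a :=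
  Real.sSup_nonneg (forall_mem_image.2 fun _ _ => Real.sqrt_nonneg _)

lemma sum_sq_le_energy_sq {j : ℕ} (hDP : D ⊆ Ps)
    (hD : (D : Set Quartile).PairwiseDisjoint fun P => (P.tile j).area) (a : Quartile → ℂ) :
    ∑ P ∈ D, ‖a P‖ ^ 2 ≤ energy Ps j a ^ 2 := by
  rw [← Real.sqrt_le_left (energy_nonneg ..)]
  exact le_csSup (bddAbove_energy ..) ⟨D, ⟨hDP, fun _ hP _ hP' hne => hD hP hP' hne⟩, rfl⟩

lemma energy_mono (h : Qs ⊆ Ps) (j : ℕ) (a : Quartile → ℂ) : energy Qs j a ≤ energy Ps j a := by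
  refine Real.sSup_le (forall_mem_image.2 fun D ⟨hDQ, hD⟩ => ?_) (energy_nonneg ..)
  rw [Real.sqrt_le_left (energy_nonneg ..)]
  exact sum_sq_le_energy_sq (hDQ.trans h) (fun P hP P' hP' hne => hD P hP P' hP' hne) a

lemma energy_pos {j : ℕ} (hP : P ∈ Ps) (ha : a P ≠ 0) : 0 < energy Ps j a := by
  have h := sum_sq_le_energy_sq (j := j) (Finset.singleton_subset_iff.2 hP) (by simp) a
  rw [Finset.sum_singleton] at h
  exact (norm_pos_iff.2 ha).trans_le (le_of_sq_le_sq h (energy_nonneg ..))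

end SizeEnergy

/-! ### Selection of trees -/

section SumUnion

variable {ι α M : Type*} [DecidableEq α] [AddCommMonoid M] [PartialOrder M] [IsOrderedAddMonoid M]
  {f : α → M}

lemma sum_union_le (hf : ∀ x, 0 ≤ f x) (s t : Finset α) :
    ∑ x ∈ s ∪ t, f x ≤ ∑ x ∈ s, f x + ∑ x ∈ t, f x := by
  rw [← Finset.sum_union_inter]
  exact le_add_of_nonneg_right (Finset.sum_nonneg fun x _ => hf x)

lemma sum_biUnion_le (hf : ∀ x, 0 ≤ f x) (s : Finset ι) (t : ι → Finset α) :
    ∑ x ∈ s.biUnion t, f x ≤ ∑ i ∈ s, ∑ x ∈ t i, f x := by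
  rw [← Finset.sup_eq_biUnion]
  exact s.apply_sup_le_sum (f := fun u => ∑ x ∈ u, f x) Finset.sum_empty (sum_union_le hf _ _)

end SumUnion

section Selection

variable {Ps : Finset Quartile} {i j : Fin 3} {a : Quartile → ℂ} {c : ℝ}

/-- The tree `T` with top `t` violates the bound on `i`-trees required by `size ≤ c`. -/
def IsHeavyTree (i : Fin 3) (a : Quartile → ℂ) (c : ℝ) (t : Quartile) (T : Finset Quartile) :
    Prop :=
  IsTree (i + 1) t T ∧ c ^ 2 * t.len < ∑ P ∈ T, ‖a P‖ ^ 2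

lemma IsHeavyTree.nonempty {t : Quartile} {T : Finset Quartile} (h : IsHeavyTree i a c t T) :
    T.Nonempty := by
  have hpos := (mul_nonneg (sq_nonneg c) t.len_pos.le).trans_lt h.2
  exact Finset.nonempty_of_sum_ne_zero hpos.ne'

/-- Tops are selected greedily, furthest in the direction of `j` first; quartiles below a
selected top are discarded. -/
lemma exists_pairwiseDisjoint_of_isHeavyTree (hij : i ≠ j)
    (F : Finset (Quartile × Finset Quartile)) (hF : ∀ p ∈ F, IsHeavyTree i a c p.1 p.2) :
    ∃ D L : Finset Quartile, (∀ P ∈ D, ∃ p ∈ F, P ∈ p.2) ∧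
      (D : Set Quartile).PairwiseDisjoint (fun P => (P.subtile j).area) ∧
      c ^ 2 * ∑ t ∈ L, t.len ≤ ∑ P ∈ D, ‖a P‖ ^ 2 ∧
      ∀ p ∈ F, ∃ P ∈ p.2, ∃ t ∈ L, P.Below t := by
  classical
  induction F using Finset.strongInduction with
  | H F ih =>
    rcases F.eq_empty_or_nonempty with rfl | hne
    · exact ⟨∅, ∅, by simp⟩
    obtain ⟨⟨t, T⟩, hmem, hmin⟩ :=
      F.exists_min_image (fun p => ((i : ℝ) - j) * (p.1.subtile i).ξ) hne
    obtain ⟨hT, hheavy⟩ := hF _ hmem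
    obtain ⟨P₀, hP₀⟩ := (hF _ hmem).nonempty
    have hbelow : ∀ P ∈ T, P.Below t := fun P hP => ⟨i, hT P hP⟩
    set F' := F.filter fun p => ∀ P ∈ p.2, ¬ P.Below t
    have hF'F : F' ⊂ F := Finset.filter_ssubset.2 ⟨_, hmem, fun h => h P₀ hP₀ (hbelow P₀ hP₀)⟩
    obtain ⟨D, L, hDF', hD, hL, hcover⟩ := ih F' hF'F fun p hp => hF p (hF'F.subset hp)
    have hDF : ∀ P ∈ D, ∃ p ∈ F, P ∈ p.2 ∧ ¬ P.Below t := fun P hP =>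
      let ⟨p, hp, hPp⟩ := hDF' P hP
      ⟨p, hF'F.subset hp, hPp, (Finset.mem_filter.1 hp).2 P hPp⟩
    have hTD : Disjoint T D := Finset.disjoint_left.2 fun P hPT hPD =>
      let ⟨_, _, _, hPt⟩ := hDF P hPD
      hPt (hbelow P hPT)
    refine ⟨T ∪ D, insert t L, fun P hP => ?_, ?_, ?_, fun p hp => ?_⟩
    · exact (Finset.mem_union.1 hP).elim (fun hPT => ⟨_, hmem, hPT⟩)
        fun hPD => (hDF P hPD).imp fun p hp => ⟨hp.1, hp.2.1⟩
    · rw [Finset.coe_union, pairwiseDisjoint_union]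
      refine ⟨hT.pairwiseDisjoint_area hij, hD, fun P hP P' hP' _ => ?_⟩
      obtain ⟨p, hp, hP'p, hP't⟩ := hDF P' hP'
      exact Quartile.disjoint_area_of_not_below hij (hT P hP) ((hF p hp).1 P' hP'p) (hmin p hp) hP't
    · calc c ^ 2 * ∑ s ∈ insert t L, s.len ≤ c ^ 2 * (t.len + ∑ s ∈ L, s.len) :=
            mul_le_mul_of_nonneg_left ((sum_union_le (fun s => s.len_pos.le) {t} L).trans_eq
              (by rw [Finset.sum_singleton])) (sq_nonneg c)
        _ ≤ ∑ P ∈ T ∪ D, ‖a P‖ ^ 2 := by rw [Finset.sum_union hTD]; linarith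
    · by_cases hpF' : p ∈ F'
      · obtain ⟨P, hP, s, hs, hPs⟩ := hcover p hpF'
        exact ⟨P, hP, s, Finset.mem_insert_of_mem hs, hPs⟩
      · obtain ⟨P, hP, hPt⟩ : ∃ P ∈ p.2, P.Below t := by simpa [F', hp] using hpF'
        exact ⟨P, hP, t, Finset.mem_insert_self t L, hPt⟩

open scoped Classical in
/-- The quartiles of `Ps` which lie below none of the tops in `L`. -/
noncomputable def remainder (Ps L : Finset Quartile) : Finset Quartile :=
  Ps.filter fun P => ∀ t ∈ L, ¬ P.Below t

lemma mem_remainder {L : Finset Quartile} {P : Quartile} :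
    P ∈ remainder Ps L ↔ P ∈ Ps ∧ ∀ t ∈ L, ¬ P.Below t := by
  simp [remainder]

lemma remainder_subset (Ps L : Finset Quartile) : remainder Ps L ⊆ Ps :=
  fun _ hP => (mem_remainder.1 hP).1

lemma remainder_anti {L M : Finset Quartile} (h : L ⊆ M) : remainder Ps M ⊆ remainder Ps L := by
  intro P hP
  rw [mem_remainder] at hP ⊢
  exact ⟨hP.1, fun t ht => hP.2 t (h ht)⟩

/-- A set of quartiles can have infinitely many tops, but one heavy top per subset of `Ps` is
enough. -/
lemma exists_remainder_not_isHeavyTree (hij : i ≠ j) (Ps : Finset Quartile) (a : Quartile → ℂ)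
    (c : ℝ) : ∃ L : Finset Quartile, c ^ 2 * ∑ t ∈ L, t.len ≤ energy Ps (j + 1) a ^ 2 ∧
      ∀ T ⊆ remainder Ps L, ∀ t, ¬ IsHeavyTree i a c t T := by
  classical
  have : Nonempty Quartile := ⟨⟨0, 0, 0⟩⟩
  choose! top htop using fun (T : Finset Quartile) (h : ∃ t, IsHeavyTree i a c t T) => h
  set F := (Ps.powerset.filter fun T => ∃ t, IsHeavyTree i a c t T).image fun T => (top T, T)
  have hF : ∀ p ∈ F, p.2 ⊆ Ps ∧ IsHeavyTree i a c p.1 p.2 := by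
    refine Finset.forall_mem_image.2 fun T hT => ?_
    obtain ⟨hTP, hheavy⟩ := Finset.mem_filter.1 hT
    exact ⟨Finset.mem_powerset.1 hTP, htop T hheavy⟩
  obtain ⟨D, L, hDF, hD, hL, hcover⟩ :=
    exists_pairwiseDisjoint_of_isHeavyTree hij F fun p hp => (hF p hp).2
  refine ⟨L, hL.trans (sum_sq_le_energy_sq (fun P hP => ?_) hD a), fun T hT t hheavy => ?_⟩
  · obtain ⟨p, hp, hPp⟩ := hDF P hP
    exact (hF p hp).1 hPp
  · have hTF : (top T, T) ∈ F := Finset.mem_image_of_mem _ <| Finset.mem_filter.2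
      ⟨Finset.mem_powerset.2 (hT.trans (remainder_subset Ps L)), t, hheavy⟩
    obtain ⟨P, hP, s, hs, hPs⟩ := hcover _ hTF
    exact (mem_remainder.1 (hT hP)).2 s hs hPs

lemma exists_size_remainder_le (Ps : Finset Quartile) (j : Fin 3) (a : Quartile → ℂ) (hc : 0 ≤ c) :
    ∃ L : Finset Quartile, c ^ 2 * ∑ t ∈ L, t.len ≤ 2 * energy Ps (j + 1) a ^ 2 ∧
      size (remainder Ps L) (j + 1) a ≤ c := by
  choose! L hL hlight using fun i (hij : i ≠ j) => exists_remainder_not_isHeavyTree hij Ps a c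
  refine ⟨(Finset.univ.erase j).biUnion L, ?_, size_le hc fun i hij T hT t htree => ?_⟩
  · calc c ^ 2 * ∑ t ∈ (Finset.univ.erase j).biUnion L, t.len
        ≤ c ^ 2 * ∑ i ∈ Finset.univ.erase j, ∑ t ∈ L i, t.len :=
          mul_le_mul_of_nonneg_left (sum_biUnion_le (fun t => t.len_pos.le) _ L) (sq_nonneg c)
      _ = ∑ i ∈ Finset.univ.erase j, c ^ 2 * ∑ t ∈ L i, t.len := Finset.mul_sum ..
      _ ≤ ∑ _i ∈ Finset.univ.erase j, energy Ps (j + 1) a ^ 2 :=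
          Finset.sum_le_sum fun i hi => hL i (Finset.ne_of_mem_erase hi)
      _ = 2 * energy Ps (j + 1) a ^ 2 := by simp [Finset.card_erase_of_mem]
  · have hLi : L i ⊆ (Finset.univ.erase j).biUnion L :=
      Finset.subset_biUnion_of_mem L (Finset.mem_erase.2 ⟨hij, Finset.mem_univ i⟩)
    exact not_lt.1 fun h => hlight i hij T (hT.trans (remainder_anti hLi)) t ⟨htree, h⟩

end Selection

/-! ### The trilinear form on trees and forests -/

section TrilinearForm

variable {Ps T : Finset Quartile} {i : Fin 3} {t : Quartile} {a : Fin 3 → Quartile → ℂ}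

/-- The summand `|I_P|^{-1/2} ∏ⱼ |a_{P_j}|` of the trilinear form, in absolute value. -/
noncomputable def absTerm (a : Fin 3 → Quartile → ℂ) (P : Quartile) : ℝ :=
  1 / √P.len * ∏ j, ‖a j P‖

lemma absTerm_nonneg (a : Fin 3 → Quartile → ℂ) (P : Quartile) : 0 ≤ absTerm a P := by
  unfold absTerm
  positivity

lemma absTerm_eq_zero {j : Fin 3} {P : Quartile} (h : a j P = 0) : absTerm a P = 0 := by
  rw [absTerm, Finset.prod_eq_zero (Finset.mem_univ j) (by rw [h, norm_zero]), mul_zero]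

lemma prod_fin_three_eq_mul_add_one {M : Type*} [CommMonoid M] (f : Fin 3 → M) (i : Fin 3) :
    ∏ j, f j = f i * (f (i + 1) * f (i + 2)) := by
  simpa [Fin.prod_univ_three, mul_assoc] using (Equiv.prod_comp (Equiv.addLeft i) f).symm

lemma prod_size_nonneg (Ps : Finset Quartile) (a : Fin 3 → Quartile → ℂ) :
    0 ≤ ∏ j : Fin 3, size Ps (j + 1) (a j) :=
  Finset.prod_nonneg fun _ _ => size_nonneg ..

/-- Hölder's inequality on an `i`-tree: `ℓ^∞` for the `i`-th coefficients, `ℓ²` for the others. -/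
lemma IsTree.sum_absTerm_le (hT : IsTree (i + 1) t T) (hTP : T ⊆ Ps)
    (a : Fin 3 → Quartile → ℂ) :
    ∑ P ∈ T, absTerm a P ≤ t.len * ∏ j : Fin 3, size Ps (j + 1) (a j) := by
  have hterm : ∀ P ∈ T, absTerm a P ≤
      size Ps (i + 1) (a i) * (‖a (i + 1) P‖ * ‖a (i + 2) P‖) := fun P hP => by
    rw [absTerm, prod_fin_three_eq_mul_add_one _ i, ← mul_assoc, one_div_mul_eq_div]
    gcongr
    rw [div_le_iff₀ (Real.sqrt_pos.2 P.len_pos)]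
    exact norm_le_size_mul_sqrt_len (hTP hP) i (a i)
  calc ∑ P ∈ T, absTerm a P
      ≤ size Ps (i + 1) (a i) * ∑ P ∈ T, ‖a (i + 1) P‖ * ‖a (i + 2) P‖ := by
        rw [Finset.mul_sum]
        exact Finset.sum_le_sum hterm
    _ ≤ size Ps (i + 1) (a i) * (size Ps ((i + 1 : Fin 3) + 1) (a (i + 1)) *
          size Ps ((i + 2 : Fin 3) + 1) (a (i + 2)) * t.len) :=
        mul_le_mul_of_nonneg_left
          (hT.sum_norm_mul_norm_le hTP (by simp) (by simp) _ _) (size_nonneg ..)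
    _ = t.len * ∏ j : Fin 3, size Ps (j + 1) (a j) := by
        rw [prod_fin_three_eq_mul_add_one _ i]
        ring

lemma sum_absTerm_le_len_mul_prod_size (Ps : Finset Quartile) (a : Fin 3 → Quartile → ℂ) :
    ∑ P ∈ Ps, absTerm a P ≤ (∑ P ∈ Ps, P.len) * ∏ j : Fin 3, size Ps (j + 1) (a j) := by
  rw [Finset.sum_mul]
  refine Finset.sum_le_sum fun P hP => ?_
  simpa using (isTree_singleton ((0 : Fin 3) + 1) P).sum_absTerm_le
    (Finset.singleton_subset_iff.2 hP) a

lemma sum_absTerm_le_sum_remainder_add (Ps L : Finset Quartile) (a : Fin 3 → Quartile → ℂ) :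
    ∑ P ∈ Ps, absTerm a P ≤ ∑ P ∈ remainder Ps L, absTerm a P +
      3 * (∑ t ∈ L, t.len) * ∏ j : Fin 3, size Ps (j + 1) (a j) := by
  classical
  set tree : Quartile → Fin 3 → Finset Quartile := fun t i =>
    Ps.filter fun P => (P.subtile i).le (t.subtile i)
  have htree : ∀ t (i : Fin 3), IsTree (i + 1) t (tree t i) := fun _ _ _ hP =>
    (Finset.mem_filter.1 hP).2
  set forest := (L ×ˢ Finset.univ).biUnion fun p => tree p.1 p.2
  have hcover : Ps ⊆ remainder Ps L ∪ forest := by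
    intro P hP
    by_cases hbelow : ∃ t ∈ L, P.Below t
    · obtain ⟨t, ht, i, hi⟩ := hbelow
      exact Finset.mem_union_right _ <| Finset.mem_biUnion.2
        ⟨(t, i), by simp [ht], Finset.mem_filter.2 ⟨hP, hi⟩⟩
    · exact Finset.mem_union_left _ (mem_remainder.2 ⟨hP, fun t ht h => hbelow ⟨t, ht, h⟩⟩)
  have hnonneg := absTerm_nonneg a
  calc ∑ P ∈ Ps, absTerm a P ≤ ∑ P ∈ remainder Ps L ∪ forest, absTerm a P :=
        Finset.sum_le_sum_of_subset_of_nonneg hcover fun P _ _ => hnonneg P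
    _ ≤ ∑ P ∈ remainder Ps L, absTerm a P + ∑ P ∈ forest, absTerm a P := sum_union_le hnonneg _ _
    _ ≤ ∑ P ∈ remainder Ps L, absTerm a P +
          ∑ p ∈ L ×ˢ Finset.univ, p.1.len * ∏ j : Fin 3, size Ps (j + 1) (a j) := by
        gcongr
        refine (sum_biUnion_le hnonneg _ _).trans (Finset.sum_le_sum fun p _ => ?_)
        exact (htree p.1 p.2).sum_absTerm_le (Finset.filter_subset _ _) a
    _ = ∑ P ∈ remainder Ps L, absTerm a P +
          3 * (∑ t ∈ L, t.len) * ∏ j : Fin 3, size Ps (j + 1) (a j) := by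
        rw [← Finset.sum_mul, Finset.sum_product]
        simp [← Finset.mul_sum]

/-- Lowering all sizes to half the level `lam` costs trees of total top length `24 / lam ^ 2`. -/
lemma exists_subset_size_le_half {E : Fin 3 → ℝ} {lam : ℝ} (hlam : 0 < lam) (hE : ∀ j, 0 < E j)
    (hEnergy : ∀ j : Fin 3, energy Ps (j + 1) (a j) ≤ E j) :
    ∃ Qs ⊆ Ps, (∀ j : Fin 3, size Qs (j + 1) (a j) ≤ E j * (lam / 2)) ∧
      ∑ P ∈ Ps, absTerm a P ≤ ∑ P ∈ Qs, absTerm a P +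
        72 / lam ^ 2 * ∏ j : Fin 3, size Ps (j + 1) (a j) := by
  classical
  choose L hL hsize using fun j : Fin 3 =>
    exists_size_remainder_le Ps j (a j) (c := E j * (lam / 2)) (by have := hE j; positivity)
  have hlen : ∀ j, ∑ t ∈ L j, t.len ≤ 8 / lam ^ 2 := fun j => by
    have hLE : (E j * (lam / 2)) ^ 2 * ∑ t ∈ L j, t.len ≤ 2 * E j ^ 2 :=
      (hL j).trans (by gcongr; exacts [energy_nonneg .., hEnergy j])
    rw [le_div_iff₀ (by positivity)]
    refine le_of_mul_le_mul_left ?_ (pow_pos (hE j) 2)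
    linarith
  refine ⟨remainder Ps (Finset.univ.biUnion L), remainder_subset .., fun j => ?_, ?_⟩
  · exact (size_mono (remainder_anti (Finset.subset_biUnion_of_mem L (Finset.mem_univ j)))
      j (a j)).trans (hsize j)
  · refine (sum_absTerm_le_sum_remainder_add Ps (Finset.univ.biUnion L) a).trans ?_
    gcongr
    · exact prod_size_nonneg Ps a
    calc 3 * ∑ t ∈ Finset.univ.biUnion L, t.len ≤ 3 * ∑ j, ∑ t ∈ L j, t.len := by
          gcongr
          exact sum_biUnion_le (fun t => t.len_pos.le) _ L
      _ ≤ 3 * ∑ _j : Fin 3, 8 / lam ^ 2 := by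
          gcongr with j
          exact hlen j
      _ = 72 / lam ^ 2 := by
          simp only [Finset.sum_const, Finset.card_univ, Fintype.card_fin, nsmul_eq_mul]
          ring

end TrilinearForm

/-! ### Summation over dyadic levels -/

section Levels

lemma min_one_le_rpow {x α : ℝ} (hx : 0 < x) (h₀ : 0 ≤ α) (h₁ : α ≤ 1) : min x 1 ≤ x ^ α := by
  rcases le_total x 1 with hx1 | hx1
  · exact (min_le_left x 1).trans (Real.self_le_rpow_of_le_one hx.le hx1 h₁)
  · exact (min_le_right x 1).trans (Real.one_le_rpow hx1 h₀)

lemma min_inv_le_sub {r v : ℝ} (hr : 1 < r) (hv : 0 < v) :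
    min v v⁻¹ ≤ 2 * (1 + r) / (r - 1) * (r * v / (1 + r * v) - v / (1 + v)) := by
  have : 0 < r := one_pos.trans hr
  have : 0 < r - 1 := sub_pos.2 hr
  have hdiff : 2 * (1 + r) / (r - 1) * (r * v / (1 + r * v) - v / (1 + v)) =
      2 * (1 + r) * v / ((1 + r * v) * (1 + v)) := by
    field_simp
    ring
  rw [hdiff, le_div_iff₀ (by positivity)]
  rcases le_total v 1 with h | h
  · calc min v v⁻¹ * ((1 + r * v) * (1 + v)) ≤ v * ((1 + r * 1) * (1 + 1)) := by
          gcongr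
          exact min_le_left ..
      _ = 2 * (1 + r) * v := by ring
  · calc min v v⁻¹ * ((1 + r * v) * (1 + v)) ≤ v⁻¹ * ((v + r * v) * (v + v)) := by
          gcongr
          exact min_le_right ..
      _ = 2 * (1 + r) * v := by field_simp; ring

lemma sum_min_inv_mul_pow_le {r v : ℝ} (hr : 1 < r) (hv : 0 < v) (N : ℕ) :
    ∑ m ∈ Finset.range N, min (v * r ^ m) (v * r ^ m)⁻¹ ≤ 2 * (1 + r) / (r - 1) := by
  have : 0 < r := one_pos.trans hr
  have : 0 < r - 1 := sub_pos.2 hr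
  set f : ℕ → ℝ := fun m => v * r ^ m / (1 + v * r ^ m)
  have hf₀ : 0 ≤ f 0 := by positivity
  have hfN : f N ≤ 1 := (div_le_one (by positivity)).2 (by linarith)
  calc ∑ m ∈ Finset.range N, min (v * r ^ m) (v * r ^ m)⁻¹
      ≤ ∑ m ∈ Finset.range N, 2 * (1 + r) / (r - 1) * (f (m + 1) - f m) := by
        gcongr with m
        have h := min_inv_le_sub hr (show 0 < v * r ^ m by positivity)
        rwa [mul_left_comm, ← pow_succ'] at h
    _ = 2 * (1 + r) / (r - 1) * (f N - f 0) := by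
        rw [← Finset.mul_sum, Finset.sum_range_sub]
    _ ≤ 2 * (1 + r) / (r - 1) := mul_le_of_le_one_right (by positivity) (by linarith)

variable {ι : Type*} [Fintype ι] {s θ : ι → ℝ} {lam : ℝ}

/-- The contribution of the level `lam` to a multilinear form with energies `1` and sizes `s`. For
three functions it is `lam⁻² * ∏ j, min (s j) lam`: selected trees have total top length `lam⁻²`,
and their sizes are at most `min (s j) lam`. -/
noncomputable def levelWeight (s : ι → ℝ) (lam : ℝ) : ℝ := lam * ∏ j, min (s j / lam) 1

lemma levelWeight_le (hs : ∀ j, 0 < s j) (hlam : 0 < lam) (hθ₀ : ∀ j, 0 ≤ θ j)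
    (hθ₁ : ∀ j, θ j ≤ 1) (hθ : ∑ j, θ j = 1) (i : ι) {δ : ℝ} (hδ₀ : 0 ≤ θ i + δ)
    (hδ₁ : θ i + δ ≤ 1) : levelWeight s lam ≤ (∏ j, s j ^ θ j) * (s i / lam) ^ δ := by
  classical
  have hpos : ∀ j, 0 < s j / lam := fun j => div_pos (hs j) hlam
  have hfactor : ∀ j, min (s j / lam) 1 ≤
      (s j / lam) ^ θ j * if j = i then (s j / lam) ^ δ else 1 := by
    intro j
    split_ifs with hj
    · subst hj
      rw [← Real.rpow_add (hpos j)]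
      exact min_one_le_rpow (hpos j) hδ₀ hδ₁
    · rw [mul_one]
      exact min_one_le_rpow (hpos j) (hθ₀ j) (hθ₁ j)
  calc levelWeight s lam
      ≤ lam * ∏ j, ((s j / lam) ^ θ j * if j = i then (s j / lam) ^ δ else 1) :=
        mul_le_mul_of_nonneg_left (Finset.prod_le_prod
          (fun j _ => le_min (hpos j).le zero_le_one) fun j _ => hfactor j) hlam.le
    _ = lam * (∏ j, s j ^ θ j) / (∏ j, lam ^ θ j) * (s i / lam) ^ δ := by
        simp only [Finset.prod_mul_distrib, Finset.prod_ite_eq', Finset.mem_univ, if_true,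
          Real.div_rpow (hs _).le hlam.le, Finset.prod_div_distrib]
        ring
    _ = (∏ j, s j ^ θ j) * (s i / lam) ^ δ := by
        rw [← Real.rpow_sum_of_pos hlam, hθ, Real.rpow_one, mul_div_cancel_left₀ _ hlam.ne']

/-- Perturbing the exponent `θ i` in both directions gives decay on both sides of the level
`s i`. -/
lemma levelWeight_le_mul_min (hs : ∀ j, 0 < s j) (hlam : 0 < lam) (hθ₀ : ∀ j, 0 ≤ θ j)
    (hθ₁ : ∀ j, θ j ≤ 1) (hθ : ∑ j, θ j = 1) (i : ι) {ε : ℝ} (hε₀ : 0 ≤ ε) (hε : ε ≤ θ i)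
    (hε' : ε ≤ 1 - θ i) : levelWeight s lam ≤
      (∏ j, s j ^ θ j) * min ((s i / lam) ^ ε) ((s i / lam) ^ ε)⁻¹ := by
  have hB : 0 ≤ ∏ j, s j ^ θ j := Finset.prod_nonneg fun j _ => Real.rpow_nonneg (hs j).le _
  have hlevel {δ : ℝ} := levelWeight_le hs hlam hθ₀ hθ₁ hθ i (δ := δ)
  rw [mul_min_of_nonneg _ _ hB, ← Real.rpow_neg (div_pos (hs i) hlam).le]
  exact le_min (hlevel (by linarith) (by linarith)) (hlevel (by linarith) (by linarith))

lemma exists_sum_levelWeight_le (hθ₀ : ∀ j, 0 ≤ θ j) (hθ₁ : ∀ j, θ j < 1) (hθ : ∑ j, θ j = 1) :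
    ∃ C > 0, ∀ (s : ι → ℝ) (l : ℝ), (∀ j, 0 < s j) → 0 < l → ∀ N : ℕ,
      ∑ m ∈ Finset.range N, levelWeight s (l / 2 ^ m) ≤ C * ∏ j, s j ^ θ j := by
  obtain ⟨i, hi⟩ : ∃ i, 0 < θ i := by
    by_contra! h
    linarith [Finset.sum_nonpos fun j (_ : j ∈ Finset.univ) => h j]
  set ε := min (θ i) (1 - θ i)
  have hε : 0 < ε := lt_min hi (sub_pos.2 (hθ₁ i))
  have hr : 1 < (2 : ℝ) ^ ε := Real.one_lt_rpow one_lt_two hε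
  have := sub_pos.2 hr
  refine ⟨2 * (1 + 2 ^ ε) / (2 ^ ε - 1), by positivity, fun s l hs hl N => ?_⟩
  have hB : 0 ≤ ∏ j, s j ^ θ j := Finset.prod_nonneg fun j _ => Real.rpow_nonneg (hs j).le _
  have hsl : 0 < s i / l := div_pos (hs i) hl
  have hgeom : ∀ m : ℕ, (s i / (l / 2 ^ m)) ^ ε = (s i / l) ^ ε * (2 ^ ε) ^ m := fun m => by
    rw [Real.rpow_pow_comm two_pos.le, ← Real.mul_rpow hsl.le (by positivity),
      div_div_eq_mul_div, mul_div_right_comm]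
  have hlevel : ∀ m : ℕ, levelWeight s (l / 2 ^ m) ≤ (∏ j, s j ^ θ j) *
      min ((s i / l) ^ ε * (2 ^ ε) ^ m) ((s i / l) ^ ε * (2 ^ ε) ^ m)⁻¹ := fun m =>
    hgeom m ▸ levelWeight_le_mul_min hs (by positivity) hθ₀ (fun j => (hθ₁ j).le) hθ i hε.le
      (min_le_left ..) (min_le_right ..)
  calc ∑ m ∈ Finset.range N, levelWeight s (l / 2 ^ m)
      ≤ (∏ j, s j ^ θ j) * ∑ m ∈ Finset.range N,
          min ((s i / l) ^ ε * (2 ^ ε) ^ m) ((s i / l) ^ ε * (2 ^ ε) ^ m)⁻¹ := by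
        rw [Finset.mul_sum]
        exact Finset.sum_le_sum fun m _ => hlevel m
    _ ≤ (∏ j, s j ^ θ j) * (2 * (1 + 2 ^ ε) / (2 ^ ε - 1)) :=
        mul_le_mul_of_nonneg_left (sum_min_inv_mul_pow_le hr (by positivity) N) hB
    _ = 2 * (1 + 2 ^ ε) / (2 ^ ε - 1) * ∏ j, s j ^ θ j := mul_comm ..

end Levels

section Iteration

variable {Ps : Finset Quartile} {a : Fin 3 → Quartile → ℂ} {E s : Fin 3 → ℝ} {l lam : ℝ}

lemma prod_mul_min_eq_levelWeight (E s : Fin 3 → ℝ) (hlam : 0 < lam) :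
    1 / lam ^ 2 * ∏ j, E j * min (s j) lam = (∏ j, E j) * levelWeight s lam := by
  have hmin : ∀ j, min (s j) lam = lam * min (s j / lam) 1 := fun j => by
    rw [mul_min_of_nonneg _ _ hlam.le, mul_div_cancel₀ _ hlam.ne', mul_one]
  simp only [hmin, levelWeight, Finset.prod_mul_distrib, Finset.prod_const, Finset.card_univ,
    Fintype.card_fin]
  field_simp

lemma exists_subset_size_le_div_two_pow (hE : ∀ j, 0 < E j) (hl : 0 < l)
    (henergy : ∀ j : Fin 3, energy Ps (j + 1) (a j) ≤ E j)
    (hsize : ∀ j : Fin 3, size Ps (j + 1) (a j) ≤ E j * s j) (hsl : ∀ j, s j ≤ l) (N : ℕ) :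
    ∃ Qs ⊆ Ps, (∀ j : Fin 3, size Qs (j + 1) (a j) ≤ E j * (l / 2 ^ N)) ∧
      ∑ P ∈ Ps, absTerm a P ≤ ∑ P ∈ Qs, absTerm a P +
        72 * (∏ j, E j) * ∑ m ∈ Finset.range N, levelWeight s (l / 2 ^ m) := by
  induction N with
  | zero =>
    refine ⟨Ps, subset_rfl, fun j => (hsize j).trans ?_, by simp⟩
    simpa using mul_le_mul_of_nonneg_left (hsl j) (hE j).le
  | succ N ih =>
    obtain ⟨Qs, hQP, hQsize, hQsum⟩ := ih
    have hlam : 0 < l / 2 ^ N := by positivity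
    set lam := l / 2 ^ N
    obtain ⟨Rs, hRQ, hRsize, hRsum⟩ := exists_subset_size_le_half (a := a) hlam hE
      fun j => (energy_mono hQP _ _).trans (henergy j)
    refine ⟨Rs, hRQ.trans hQP, fun j => ?_, ?_⟩
    · rw [pow_succ, ← div_div]
      exact hRsize j
    have hprod : ∏ j : Fin 3, size Qs (j + 1) (a j) ≤ ∏ j, E j * min (s j) lam := by
      refine Finset.prod_le_prod (fun j _ => size_nonneg ..) fun j _ => ?_
      rw [mul_min_of_nonneg _ _ (hE j).le]
      exact le_min ((size_mono hQP j (a j)).trans (hsize j)) (hQsize j)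
    have hlevel : 72 / lam ^ 2 * ∏ j : Fin 3, size Qs (j + 1) (a j) ≤
        72 * (∏ j, E j) * levelWeight s lam := by
      rw [mul_assoc, ← prod_mul_min_eq_levelWeight E s hlam, ← mul_assoc, mul_one_div]
      gcongr
    rw [Finset.sum_range_succ, mul_add]
    linarith

/-- After `N` rounds the remaining quartiles have all sizes `O(2⁻ᴺ)`, so their contribution
vanishes in the limit. -/
lemma sum_absTerm_le_of_sum_levelWeight_le {K : ℝ} (hE : ∀ j, 0 < E j) (hl : 0 < l)
    (henergy : ∀ j : Fin 3, energy Ps (j + 1) (a j) ≤ E j)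
    (hsize : ∀ j : Fin 3, size Ps (j + 1) (a j) ≤ E j * s j) (hsl : ∀ j, s j ≤ l)
    (hK : ∀ N, ∑ m ∈ Finset.range N, levelWeight s (l / 2 ^ m) ≤ K) :
    ∑ P ∈ Ps, absTerm a P ≤ 72 * (∏ j, E j) * K := by
  have hprodE : 0 ≤ ∏ j, E j := Finset.prod_nonneg fun j _ => (hE j).le
  have hbound : ∀ N : ℕ, ∑ P ∈ Ps, absTerm a P ≤
      (∑ P ∈ Ps, P.len) * ∏ j, E j * (l / 2 ^ N) + 72 * (∏ j, E j) * K := by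
    intro N
    obtain ⟨Qs, hQP, hQsize, hQsum⟩ :=
      exists_subset_size_le_div_two_pow hE hl henergy hsize hsl N
    refine hQsum.trans (add_le_add ((sum_absTerm_le_len_mul_prod_size Qs a).trans ?_) ?_)
    · gcongr with j
      · exact prod_size_nonneg Qs a
      · exact Finset.sum_nonneg fun P _ => P.len_pos.le
      · exact fun P _ _ => P.len_pos.le
      · exact fun _ _ => size_nonneg ..
      · exact hQsize j
    · exact mul_le_mul_of_nonneg_left (hK N) (by positivity)
  have hzero : Filter.Tendsto (fun N : ℕ => l / (2 : ℝ) ^ N) Filter.atTop (nhds 0) :=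
    tendsto_const_nhds.div_atTop (tendsto_pow_atTop_atTop_of_one_lt one_lt_two)
  have hlim := ((tendsto_finsetProd Finset.univ fun j _ => hzero.const_mul (E j)).const_mul
    (∑ P ∈ Ps, P.len)).add_const (72 * (∏ j, E j) * K)
  simpa using ge_of_tendsto' hlim hbound

end Iteration

lemma mul_div_rpow_eq {E S θ : ℝ} (hE : 0 < E) (hS : 0 ≤ S) :
    E * (S / E) ^ θ = S ^ θ * E ^ (1 - θ) := by
  rw [Real.div_rpow hS hE.le, Real.rpow_sub hE, Real.rpow_one]
  ring

lemma exists_sum_absTerm_le {θ : Fin 3 → ℝ} (hθ₀ : ∀ j, 0 ≤ θ j) (hθ₁ : ∀ j, θ j < 1)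
    (hθ : ∑ j, θ j = 1) :
    ∃ C > 0, ∀ (Ps : Finset Quartile) (a : Fin 3 → Quartile → ℂ), ∑ P ∈ Ps, absTerm a P ≤
      C * ∏ j : Fin 3, size Ps (j + 1) (a j) ^ θ j * energy Ps (j + 1) (a j) ^ (1 - θ j) := by
  obtain ⟨C, hC, hlevels⟩ := exists_sum_levelWeight_le hθ₀ hθ₁ hθ
  refine ⟨72 * C, by positivity, fun Ps a => ?_⟩
  set E : Fin 3 → ℝ := fun j => energy Ps (j + 1) (a j)
  set S : Fin 3 → ℝ := fun j => size Ps (j + 1) (a j)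
  by_cases hzero : ∃ j, ∀ P ∈ Ps, a j P = 0
  · obtain ⟨j, hj⟩ := hzero
    rw [Finset.sum_eq_zero fun P hP => absTerm_eq_zero (hj P hP)]
    exact mul_nonneg (by positivity) <| Finset.prod_nonneg fun j _ =>
      mul_nonneg (Real.rpow_nonneg (size_nonneg ..) _) (Real.rpow_nonneg (energy_nonneg ..) _)
  push Not at hzero
  choose P hP haP using hzero
  have hE : ∀ j, 0 < E j := fun j => energy_pos (hP j) (haP j)
  have hS : ∀ j, 0 < S j := fun j => size_pos (hP j) (haP j)
  set s : Fin 3 → ℝ := fun j => S j / E j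
  have hs : ∀ j, 0 < s j := fun j => div_pos (hS j) (hE j)
  have hl : 0 < ∑ j, s j := Finset.sum_pos (fun j _ => hs j) Finset.univ_nonempty
  calc ∑ P ∈ Ps, absTerm a P ≤ 72 * (∏ j, E j) * (C * ∏ j, s j ^ θ j) :=
        sum_absTerm_le_of_sum_levelWeight_le hE hl (fun _ => le_rfl)
          (fun j => (mul_div_cancel₀ (S j) (hE j).ne').ge)
          (fun j => Finset.single_le_sum (fun k _ => (hs k).le) (Finset.mem_univ j))
          (hlevels s _ hs hl)
    _ = 72 * C * ∏ j, E j * s j ^ θ j := by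
        rw [Finset.prod_mul_distrib]
        ring
    _ = 72 * C * ∏ j, S j ^ θ j * E j ^ (1 - θ j) := by
        simp only [s, mul_div_rpow_eq (hE _) (hS _).le]

/-- the abstract trilinear size-energy estimate. -/
theorem trilinear_size_energy (θ₁ θ₂ θ₃ : ℝ)
    (h₁ : 0 ≤ θ₁) (h₂ : 0 ≤ θ₂) (h₃ : 0 ≤ θ₃)
    (h₁' : θ₁ < 1) (h₂' : θ₂ < 1) (h₃' : θ₃ < 1)
    (hsum : θ₁ + θ₂ + θ₃ = 1) :
    ∃ C : ℝ, 0 < C ∧ ∀ (Ps : Finset Quartile) (a₁ a₂ a₃ : Quartile → ℂ),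
      ‖∑ P ∈ Ps, ((1 / Real.sqrt P.len : ℝ) : ℂ) * (a₁ P * a₂ P * a₃ P)‖ ≤
        C * ((size Ps 1 a₁ ^ θ₁ * energy Ps 1 a₁ ^ (1 - θ₁)) *
             (size Ps 2 a₂ ^ θ₂ * energy Ps 2 a₂ ^ (1 - θ₂)) *
             (size Ps 3 a₃ ^ θ₃ * energy Ps 3 a₃ ^ (1 - θ₃))) := by
  obtain ⟨C, hC, hbound⟩ := exists_sum_absTerm_le (θ := ![θ₁, θ₂, θ₃])
    (by simp [Fin.forall_fin_succ, h₁, h₂, h₃]) (by simp [Fin.forall_fin_succ, h₁', h₂', h₃'])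
    ((Fin.sum_univ_three _).trans hsum)
  refine ⟨C, hC, fun Ps a₁ a₂ a₃ => ?_⟩
  calc ‖∑ P ∈ Ps, ((1 / √P.len : ℝ) : ℂ) * (a₁ P * a₂ P * a₃ P)‖
      ≤ ∑ P ∈ Ps, ‖((1 / √P.len : ℝ) : ℂ) * (a₁ P * a₂ P * a₃ P)‖ := norm_sum_le ..
    _ = ∑ P ∈ Ps, absTerm ![a₁, a₂, a₃] P := by
        simp [absTerm, Fin.prod_univ_three, abs_of_nonneg (Real.sqrt_nonneg _)]
    _ ≤ _ := by simpa [Fin.prod_univ_three] using hbound Ps ![a₁, a₂, a₃]
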